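/- For every positive integer q, the symmetric limit lim_{L→∞} ∑_{l=−L}^{L} ∑_{m,n=0}^{∞} 1/((2l+1)(2m+1)(2n+1)^q (2l+2m+2n+3)) equals 0, where for each fixed l the double sum over m, n ≥ 0 converges. -/

import Mathlib

open Filter

/-- Core inequality. -/
lemma aux_bound (x y N : ℝ) (hx : 0 < x) (hN : 0 < N) (hxy : x ≤ y) (hs : 2 * N ≤ x + y) :
    (x * y)⁻¹ ≤ N ^ (-(1/2 : ℝ)) * x ^ (-(3/2 : ℝ)) := by
  have hy : 0 < y := lt_of_lt_of_le hx hxy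
  have e1 : x ^ (-(3/2 : ℝ)) = x⁻¹ * x ^ (-(1/2 : ℝ)) := by
    rw [← Real.rpow_neg_one, ← Real.rpow_add hx]; norm_num
  have e2 : y⁻¹ = y ^ (-(1/2 : ℝ)) * y ^ (-(1/2 : ℝ)) := by
    rw [← Real.rpow_neg_one, ← Real.rpow_add hy]; norm_num
  have h1 : y ^ (-(1/2 : ℝ)) ≤ N ^ (-(1/2 : ℝ)) :=
    Real.rpow_le_rpow_of_nonpos hN (by linarith) (by norm_num)
  have h2 : y ^ (-(1/2 : ℝ)) ≤ x ^ (-(1/2 : ℝ)) :=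
    Real.rpow_le_rpow_of_nonpos hx hxy (by norm_num)
  rw [mul_inv, e1, e2]
  have h3 := mul_le_mul h1 h2 (by positivity) (by positivity)
  calc _ ≤ x⁻¹ * (N ^ (-(1/2 : ℝ)) * x ^ (-(1/2 : ℝ))) := by gcongr
    _ = _ := by ring

lemma aux_bound2 (x y N : ℝ) (hx : 0 < x) (hy : 0 < y) (hN : 0 < N) (hs : 2 * N ≤ x + y) :
    (x * y)⁻¹ ≤ N ^ (-(1/2 : ℝ)) * (x ^ (-(3/2 : ℝ)) + y ^ (-(3/2 : ℝ))) := by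
  have px : 0 ≤ N ^ (-(1/2 : ℝ)) * x ^ (-(3/2 : ℝ)) := by positivity
  have py : 0 ≤ N ^ (-(1/2 : ℝ)) * y ^ (-(3/2 : ℝ)) := by positivity
  rw [mul_add]
  rcases le_total x y with h | h
  · linarith [aux_bound x y N hx hN h hs]
  · have := aux_bound y x N hy hN h (by linarith)
    rw [mul_comm y x] at this
    linarith

lemma aux_bound3 (m n N : ℝ) (hm : 0 ≤ m) (hn : 0 ≤ n) (hN : N = m + n + 1) :
    N ^ (-(1/2 : ℝ)) ≤ (m + 1) ^ (-(1/4 : ℝ)) * (n + 1) ^ (-(1/4 : ℝ)) := by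
  have hN0 : 0 < N := by linarith
  have e : N ^ (-(1/2 : ℝ)) = (N * N) ^ (-(1/4 : ℝ)) := by
    rw [Real.mul_rpow hN0.le hN0.le, ← Real.rpow_add hN0]; norm_num
  rw [e, ← Real.mul_rpow (by linarith) (by linarith)]
  apply Real.rpow_le_rpow_of_nonpos (by positivity) _ (by norm_num)
  subst hN
  nlinarith [mul_nonneg hm hn]

lemma oddabs_pos (k : ℤ) : 0 < |2 * (k : ℝ) + 1| := by
  rw [abs_pos]
  have : (2 * k + 1 : ℤ) ≠ 0 := by omega
  exact_mod_cast this

lemma odd_ne (k : ℤ) : 2 * (k : ℝ) + 1 ≠ 0 := abs_pos.1 (oddabs_pos k)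

/-- The shear equivalence. -/
def shear : ℤ × (ℕ × ℕ) ≃ ℤ × (ℕ × ℕ) where
  toFun p := (p.1 + (p.2.1 + p.2.2 + 1), p.2)
  invFun p := (p.1 - (p.2.1 + p.2.2 + 1), p.2)
  left_inv p := by ext <;> simp
  right_inv p := by ext <;> simp

lemma summable_int : Summable (fun l : ℤ => |2 * (l : ℝ) + 1| ^ (-(3/2 : ℝ))) := by
  have h := Real.summable_abs_int_rpow (b := 3/2) (by norm_num)
  have h2 := h.comp_injective (i := fun l : ℤ => 2 * l + 1) (by intro a b; simp)
  refine h2.congr ?_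
  intro l
  simp

lemma summable_nat : Summable (fun n : ℕ => ((n : ℝ) + 1) ^ (-(5/4 : ℝ))) := by
  have h := (Real.summable_nat_rpow (p := -(5/4))).2 (by norm_num)
  refine (h.comp_injective (i := fun n : ℕ => n + 1) (by intro a b; simp)).congr ?_
  intro l
  simp

/-- The summand. -/
noncomputable def FF (q : ℕ) (p : ℤ × (ℕ × ℕ)) : ℝ :=
  1 / ((2 * (p.1 : ℝ) + 1) * (2 * (p.2.1 : ℝ) + 1) * (2 * (p.2.2 : ℝ) + 1) ^ q
        * (2 * (p.1 : ℝ) + 2 * (p.2.1 : ℝ) + 2 * (p.2.2 : ℝ) + 3))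

lemma FF_le (q : ℕ) (hq : 1 ≤ q) (l : ℤ) (m n : ℕ) :
    |FF q (l, (m, n))| ≤ (|2 * (l : ℝ) + 1| ^ (-(3/2 : ℝ))
      + |2 * ((l + (m + n + 1) : ℤ) : ℝ) + 1| ^ (-(3/2 : ℝ))) *
      (((m : ℝ) + 1) ^ (-(5/4 : ℝ)) * ((n : ℝ) + 1) ^ (-(5/4 : ℝ))) := by
  have e : ∀ t : ℝ, 0 < t → t ^ (-(5/4 : ℝ)) = t⁻¹ * t ^ (-(1/4 : ℝ)) := by
    intro t ht
    rw [← Real.rpow_neg_one, ← Real.rpow_add ht]; norm_num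
  have hx := oddabs_pos l
  have hy := oddabs_pos (l + (m + n + 1))
  set x := |2 * (l : ℝ) + 1| with hxd
  set y := |2 * ((l + (m + n + 1) : ℤ) : ℝ) + 1| with hyd
  have hm : (0 : ℝ) ≤ m := by positivity
  have hn : (0 : ℝ) ≤ n := by positivity
  have hs : 2 * ((m : ℝ) + n + 1) ≤ x + y := by
    have h1 := neg_abs_le (2 * (l : ℝ) + 1)
    have h2 := le_abs_self (2 * ((l + (m + n + 1) : ℤ) : ℝ) + 1)
    rw [← hxd] at h1
    rw [← hyd] at h2
    push_cast at h2
    linarith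
  have hb := aux_bound2 x y ((m : ℝ) + n + 1) hx hy (by positivity) hs
  have hc := aux_bound3 m n _ hm hn rfl
  have hF : |FF q (l, (m, n))| = (x * y)⁻¹ * ((2 * (m : ℝ) + 1)⁻¹ * ((2 * (n : ℝ) + 1) ^ q)⁻¹) := by
    have : 2 * (l : ℝ) + 2 * (m : ℝ) + 2 * (n : ℝ) + 3 = 2 * ((l + (m + n + 1) : ℤ) : ℝ) + 1 := by
      push_cast; ring
    simp only [FF]
    rw [this, abs_div, abs_mul, abs_mul, abs_mul, ← hxd, ← hyd, abs_one,
      abs_of_pos (show (0 : ℝ) < 2 * m + 1 by positivity),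
      abs_of_pos (show (0 : ℝ) < (2 * n + 1) ^ q by positivity), one_div]
    simp only [mul_inv]
    ring
  rw [hF]
  have h1 : (2 * (m : ℝ) + 1)⁻¹ ≤ ((m : ℝ) + 1)⁻¹ := by
    apply inv_anti₀ (by positivity); linarith
  have h2 : ((2 * (n : ℝ) + 1) ^ q)⁻¹ ≤ ((n : ℝ) + 1)⁻¹ := by
    apply inv_anti₀ (by positivity)
    have : (2 * (n : ℝ) + 1) ^ 1 ≤ (2 * (n : ℝ) + 1) ^ q := pow_le_pow_right₀ (by linarith) hq
    linarith
  rw [e _ (by positivity), e _ (by positivity)]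
  have hS : 0 ≤ x ^ (-(3/2 : ℝ)) + y ^ (-(3/2 : ℝ)) := by positivity
  calc _ ≤ (((m + 1 : ℝ) ^ (-(1/4 : ℝ)) * (n + 1 : ℝ) ^ (-(1/4 : ℝ))) *
        (x ^ (-(3/2 : ℝ)) + y ^ (-(3/2 : ℝ)))) * (((m : ℝ) + 1)⁻¹ * ((n : ℝ) + 1)⁻¹) := by
        refine mul_le_mul (hb.trans ?_) ?_ (by positivity) (by positivity)
        · gcongr
        · gcongr
    _ = _ := by ring

lemma FF_summable (q : ℕ) (hq : 1 ≤ q) : Summable (FF q) := by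
  have hnn : Summable (fun p : ℕ × ℕ =>
      ((p.1 : ℝ) + 1) ^ (-(5/4 : ℝ)) * ((p.2 : ℝ) + 1) ^ (-(5/4 : ℝ))) :=
    summable_nat.mul_of_nonneg summable_nat (fun _ => by positivity) (fun _ => by positivity)
  have h1 : Summable (fun p : ℤ × (ℕ × ℕ) => |2 * (p.1 : ℝ) + 1| ^ (-(3/2 : ℝ)) *
      (((p.2.1 : ℝ) + 1) ^ (-(5/4 : ℝ)) * ((p.2.2 : ℝ) + 1) ^ (-(5/4 : ℝ)))) :=
    summable_int.mul_of_nonneg hnn (fun _ => by positivity) (fun _ => by positivity)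
  have h2 := shear.summable_iff.2 h1
  refine Summable.of_norm_bounded (h1.add h2) ?_
  rintro ⟨l, m, n⟩
  refine (FF_le q hq l m n).trans (le_of_eq ?_)
  simp [shear, add_mul]

lemma Icc_tendsto : Tendsto (fun L : ℕ => Finset.Icc (-(L : ℤ)) (L : ℤ)) atTop atTop := by
  apply tendsto_atTop_finset_of_monotone
  · intro a b hab
    apply Finset.Icc_subset_Icc <;> omega
  · intro x
    exact ⟨x.natAbs, by simp only [Finset.mem_Icc]; omega⟩

lemma tele (u : ℤ → ℝ) (L : ℕ) : ∑ l ∈ Finset.Icc (-(L : ℤ)) (L : ℤ), (u l - u (l + 1))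
    = u (-(L : ℤ)) - u (L + 1) := by
  induction L with
  | zero => simp
  | succ k ih =>
    have : Finset.Icc (-((k + 1 : ℕ) : ℤ)) ((k + 1 : ℕ) : ℤ) =
        insert (-((k : ℤ) + 1)) (insert ((k : ℤ) + 1) (Finset.Icc (-(k : ℤ)) (k : ℤ))) := by
      ext x; simp only [Finset.mem_Icc, Finset.mem_insert]; push_cast; omega
    rw [this, Finset.sum_insert, Finset.sum_insert, ih]
    · push_cast
      rw [show -((k : ℤ) + 1) + 1 = -k by ring]
      ring
    · simp
    · simp only [Finset.mem_Icc, Finset.mem_insert]; omega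

lemma hasSum_one : HasSum (fun l : ℤ => (2 * (l : ℝ) + 1)⁻¹ - (2 * ((l + 1 : ℤ) : ℝ) + 1)⁻¹) 0 := by
  have hs : Summable (fun l : ℤ => (2 * (l : ℝ) + 1)⁻¹ - (2 * ((l + 1 : ℤ) : ℝ) + 1)⁻¹) := by
    have h := ((FF_summable 1 le_rfl).comp_injective
      (i := fun l : ℤ => (l, ((0 : ℕ), (0 : ℕ)))) (by intro a b; simp)).mul_left 2
    refine h.congr ?_
    intro l
    have h1 := odd_ne l
    have h2 := odd_ne (l + 1)
    have h3 : 2 * (l : ℝ) + 3 ≠ 0 := by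
      intro h; apply h2; push_cast; linarith
    push_cast at h2 ⊢
    simp only [FF, Function.comp]
    rw [show 2 * ((l : ℝ) + 1) + 1 = 2 * l + 3 by ring]
    simp only [Nat.cast_zero, mul_zero, add_zero, zero_add, mul_one, one_pow]
    field_simp
    ring
  have ht := hs.hasSum.comp Icc_tendsto
  have e := tele (fun l : ℤ => (2 * (l : ℝ) + 1)⁻¹)
  have ht0 : Tendsto (fun L : ℕ => (2 * ((-(L : ℤ) : ℤ) : ℝ) + 1)⁻¹
      - (2 * (((L : ℤ) + 1 : ℤ) : ℝ) + 1)⁻¹) atTop (nhds 0) := by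
    rw [← sub_zero (0 : ℝ)]
    have hL : Tendsto (fun L : ℕ => 2 * (L : ℝ)) atTop atTop :=
      (tendsto_natCast_atTop_atTop).const_mul_atTop (by norm_num)
    apply Tendsto.sub
    · apply Tendsto.inv_tendsto_atBot
      apply tendsto_atBot_add_const_right
      have := tendsto_neg_atTop_atBot.comp hL
      refine this.congr ?_
      intro L; simp
    · apply Tendsto.inv_tendsto_atTop
      apply tendsto_atTop_add_const_right
      refine (tendsto_atTop_add_const_right _ 2 hL).congr ?_
      intro L; push_cast; ring
  have hu : Tendsto (fun L : ℕ => ∑ l ∈ Finset.Icc (-(L : ℤ)) (L : ℤ),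
      ((2 * (l : ℝ) + 1)⁻¹ - (2 * ((l + 1 : ℤ) : ℝ) + 1)⁻¹)) atTop (nhds 0) :=
    ht0.congr (fun L => (e L).symm)
  have := tendsto_nhds_unique ht hu
  rw [← this]
  exact hs.hasSum

lemma hasSum_N (N : ℕ) :
    HasSum (fun l : ℤ => (2 * (l : ℝ) + 1)⁻¹ - (2 * ((l + N : ℤ) : ℝ) + 1)⁻¹) 0 := by
  induction N with
  | zero => simp
  | succ k ih =>
    have h := (Equiv.addRight (k : ℤ)).hasSum_iff.2 hasSum_one
    have h2 := ih.add h
    rw [add_zero] at h2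
    convert h2 using 2 with l
    simp only [Function.comp, Equiv.coe_addRight]
    push_cast
    ring

lemma slice_zero (q m n : ℕ) : ∑' l : ℤ, FF q (l, (m, n)) = 0 := by
  have h := (hasSum_N (m + n + 1)).mul_left
    ((2 * ((m : ℝ) + n + 1))⁻¹ * ((2 * (m : ℝ) + 1)⁻¹ * ((2 * (n : ℝ) + 1) ^ q)⁻¹))
  rw [mul_zero] at h
  rw [← h.tsum_eq]
  congr 1
  funext l
  have h1 := odd_ne l
  have h2 := odd_ne (l + (m + n + 1))
  have hN : (m : ℝ) + n + 1 ≠ 0 := by positivity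
  simp only [FF]
  have e1 : 2 * (l : ℝ) + 2 * (m : ℝ) + 2 * (n : ℝ) + 3 = 2 * ((l + (m + n + 1) : ℤ) : ℝ) + 1 := by
    push_cast; ring
  rw [e1]
  have e2 : ((l + ((m + n + 1 : ℕ) : ℤ) : ℤ) : ℝ) = ((l + (m + n + 1) : ℤ) : ℝ) := by
    push_cast; ring
  rw [e2]
  rw [inv_sub_inv h1 h2]
  have e3 : 2 * ((l + (m + n + 1) : ℤ) : ℝ) + 1 - (2 * (l : ℝ) + 1) = 2 * ((m : ℝ) + n + 1) := by
    push_cast; ring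
  rw [e3]
  have hm : 2 * (m : ℝ) + 1 ≠ 0 := by positivity
  have hn : (2 * (n : ℝ) + 1) ^ q ≠ 0 := by positivity
  generalize (2 * (n : ℝ) + 1) ^ q = w at *
  generalize 2 * ((l + (m + n + 1) : ℤ) : ℝ) + 1 = b at *
  field_simp

/-- **Lemma.** For every positive integer `q`, for each fixed `l ∈ ℤ` the double sum
`∑_{m,n≥0} 1/((2l+1)(2m+1)(2n+1)^q (2l+2m+2n+3))` converges, and the symmetric limit
`lim_{L→∞} ∑_{l=−L}^{L} ∑_{m,n≥0} 1/((2l+1)(2m+1)(2n+1)^q (2l+2m+2n+3))` equals `0`. -/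
theorem symmetric_sum_vanishes (q : ℕ) (hq : 1 ≤ q) :
    (∀ l : ℤ, Summable (fun mn : ℕ × ℕ =>
      1 / ((2 * (l : ℝ) + 1) * (2 * (mn.1 : ℝ) + 1) * (2 * (mn.2 : ℝ) + 1) ^ q
        * (2 * (l : ℝ) + 2 * (mn.1 : ℝ) + 2 * (mn.2 : ℝ) + 3)))) ∧
    Tendsto (fun L : ℕ =>
        ∑ l ∈ Finset.Icc (-(L : ℤ)) (L : ℤ),
          ∑' mn : ℕ × ℕ,
            1 / ((2 * (l : ℝ) + 1) * (2 * (mn.1 : ℝ) + 1) * (2 * (mn.2 : ℝ) + 1) ^ q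
              * (2 * (l : ℝ) + 2 * (mn.1 : ℝ) + 2 * (mn.2 : ℝ) + 3)))
      atTop (nhds 0) := by

  have hF := FF_summable q hq
  refine ⟨fun l => hF.prod_factor l, ?_⟩
  have h0 : ∑' p, FF q p = 0 := by
    have hsw := (Equiv.prodComm (ℕ × ℕ) ℤ).summable_iff.2 hF
    rw [← (Equiv.prodComm (ℕ × ℕ) ℤ).tsum_eq]
    refine hsw.tsum_prod.trans ?_
    have : ∀ b : ℕ × ℕ, ∑' c : ℤ, FF q ((Equiv.prodComm (ℕ × ℕ) ℤ) (b, c)) = 0 :=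
      fun b => slice_zero q b.1 b.2
    refine (tsum_congr this).trans tsum_zero
  have hS : HasSum (fun l : ℤ => ∑' mn : ℕ × ℕ, FF q (l, mn)) 0 := by
    rw [← h0]
    exact hF.hasSum.prod_fiberwise (fun l => (hF.prod_factor l).hasSum)
  exact hS.comp Icc_tendsto
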